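/- arXiv:2102.01973 — 3 statements merged into one kernel-verified Lean document; each statement's English description precedes it below -/
import Mathlib

section
/- Let Φ be a rich sequence, M ⊨ T a countable model, n ∈ ℕ, and let a_0, …, a_{n−1} ∈ M satisfy M ⊨ D_{Φ,n}(a_{<n}). Then there exists a sequence a ∈ M^ℕ extending a_{<n} which realizes D_Φ and whose image is all of M (i.e. a enumerates M). In particular, D_Φ is realized by an enumeration in every countable model of T, so D_Φ is never empty. -/
open FirstOrder FirstOrder.Language

variable {L : FirstOrder.Language}

/-- A sequence `Φ = (φ_n(x_{<n}, y))_n` of formulas (with `y` a single variable) is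
rich if every formula `φ(x_{<k}, y)` appears, up to dummy variables, as `φ_n` for some
`n ≥ k`. -/
def IsRich (Φ : ∀ n : ℕ, L.Formula (Fin n ⊕ Unit)) : Prop :=
  ∀ (k : ℕ) (ψ : L.Formula (Fin k ⊕ Unit)),
    ∃ (n : ℕ) (h : k ≤ n), Φ n = ψ.relabel (Sum.map (Fin.castLE h) id)

/-- `a_{<n}` realizes `D_{Φ,n}`, i.e.
`⋀_{k<n} ∀y [φ_k(a_{<k}, y) → φ_k(a_{<k}, a_k)]` holds in `M`. -/
def RealizesDn (Φ : ∀ n : ℕ, L.Formula (Fin n ⊕ Unit)) {M : Type*} [L.Structure M]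
    (n : ℕ) (a : Fin n → M) : Prop :=
  ∀ (k : Fin n) (y : M),
    (Φ k).Realize (Sum.elim (fun i : Fin k => a (Fin.castLE k.2.le i)) (fun _ => y)) →
    (Φ k).Realize (Sum.elim (fun i : Fin k => a (Fin.castLE k.2.le i)) (fun _ => a k))

/-- The sequence `a : ℕ → M` realizes the partial type `D_Φ = ⋀_n D_{Φ,n}(x_{<n})`. -/
def RealizesD (Φ : ∀ n : ℕ, L.Formula (Fin n ⊕ Unit)) {M : Type*} [L.Structure M]
    (a : ℕ → M) : Prop :=
  ∀ (k : ℕ) (y : M),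
    (Φ k).Realize (Sum.elim (fun i : Fin k => a i) (fun _ => y)) →
    (Φ k).Realize (Sum.elim (fun i : Fin k => a i) (fun _ => a k))

/-!
Build the sequence greedily, choosing at each stage `k ≥ n` a witness for `φ_k` over the entries
already chosen. By richness the formula `⊤` appears as `φ_k` for infinitely many `k`; at such
stages every element is a legitimate choice, so a countable `M` can be enumerated along them.
-/

section Selection

variable {M : Type*}

theorem exists_seq_extending_of_step (step : ∀ k : ℕ, (Fin k → M) → M) {n : ℕ} (a : Fin n → M) :
    ∃ b : ℕ → M, (∀ i : Fin n, b i = a i) ∧ ∀ k, n ≤ k → b k = step k (fun i : Fin k => b i) := by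
  let b : ℕ → M := Nat.strongRec fun k prev =>
    if h : k < n then a ⟨k, h⟩ else step k fun i => prev i i.2
  have b_eq (k : ℕ) : b k = if h : k < n then a ⟨k, h⟩ else step k fun i : Fin k => b i :=
    Nat.strongRec_eq ..
  exact ⟨b, fun i => by rw [b_eq, dif_pos i.2], fun k hk => by rw [b_eq, dif_neg hk.not_gt]⟩

theorem exists_injective_forall_mem_of_infinite [Countable M] {α : Type*} {A : Set α}
    (hA : A.Infinite) : ∃ t : M → α, Function.Injective t ∧ ∀ m, t m ∈ A := by
  obtain ⟨code, code_injective⟩ := Countable.exists_injective_nat M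
  exact ⟨fun m => hA.natEmbedding A (code m),
    Subtype.val_injective.comp ((hA.natEmbedding A).injective.comp code_injective),
    fun m => (hA.natEmbedding A (code m)).2⟩

theorem exists_surjective_selection_extending [Countable M] {S : ∀ k : ℕ, (Fin k → M) → Set M}
    (nonempty : ∀ k p, (S k p).Nonempty) (infinite_univ : {k | ∀ p, S k p = Set.univ}.Infinite)
    {n : ℕ} (a : Fin n → M)
    (ha : ∀ k : Fin n, a k ∈ S k (fun i : Fin k => a (Fin.castLE k.2.le i))) :
    ∃ b : ℕ → M, (∀ i : Fin n, b i = a i) ∧ (∀ k, b k ∈ S k (fun i : Fin k => b i)) ∧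
      Function.Surjective b := by
  have : Nonempty M := (nonempty n a).nonempty
  obtain ⟨stage, stage_injective, stage_mem⟩ := exists_injective_forall_mem_of_infinite (M := M)
    (infinite_univ.sdiff (Set.finite_Iio n))
  let scheduled : ℕ → M := Function.invFun stage
  have exists_choice (k : ℕ) (p : Fin k → M) :
      ∃ w ∈ S k p, scheduled k ∈ S k p → w = scheduled k := by
    by_cases h : scheduled k ∈ S k p
    · exact ⟨_, h, fun _ => rfl⟩
    · exact (nonempty k p).imp fun w hw => ⟨hw, fun h' => absurd h' h⟩
  choose step step_mem step_eq using exists_choice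
  obtain ⟨b, b_extends, b_eq⟩ := exists_seq_extending_of_step step a
  refine ⟨b, b_extends, fun k => ?_, fun m => ⟨stage m, ?_⟩⟩
  · rcases lt_or_ge k n with hk | hk
    · have prefix_eq : (fun i : Fin k => b i) = fun i => a (Fin.castLE hk.le i) :=
        funext fun i => b_extends (Fin.castLE hk.le i)
      rw [prefix_eq, b_extends ⟨k, hk⟩]
      exact ha ⟨k, hk⟩
    · rw [b_eq k hk]
      exact step_mem k _
  · obtain ⟨stage_univ, n_le⟩ := stage_mem m
    rw [b_eq _ (not_lt.mp n_le), step_eq _ _ (stage_univ _ ▸ Set.mem_univ _)]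
    exact Function.leftInverse_invFun stage_injective m

end Selection

section Witnesses

variable {M : Type*} [L.Structure M]

/-- The Henkin witnesses of `φ(v, y)`: those `w` for which `φ(v, w)` holds as soon as `φ(v, y)`
holds for some `y`. A sequence realizes `D_Φ` when each of its entries is a witness of `φ_k` over
the preceding ones. -/
def henkinWitnesses {α : Type*} (φ : L.Formula (α ⊕ Unit)) (v : α → M) : Set M :=
  {w | ∀ y, φ.Realize (Sum.elim v fun _ => y) → φ.Realize (Sum.elim v fun _ => w)}

theorem henkinWitnesses_nonempty [Nonempty M] {α : Type*} (φ : L.Formula (α ⊕ Unit))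
    (v : α → M) : (henkinWitnesses φ v).Nonempty := by
  by_cases h : ∃ w, φ.Realize (Sum.elim v fun _ => w)
  · exact h.imp fun _ hw _ _ => hw
  · exact ⟨Classical.arbitrary M, fun y hy => absurd ⟨y, hy⟩ h⟩

theorem IsRich.infinite_henkinWitnesses_eq_univ {Φ : ∀ n : ℕ, L.Formula (Fin n ⊕ Unit)}
    (hΦ : IsRich Φ) :
    {k | ∀ v : Fin k → M, henkinWitnesses (Φ k) v = Set.univ}.Infinite := by
  refine Set.infinite_of_forall_exists_gt fun m => ?_
  obtain ⟨k, hmk, hk⟩ := hΦ (m + 1) ⊤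
  refine ⟨k, fun v => Set.eq_univ_of_forall fun w y _ => ?_, hmk⟩
  rw [hk, Formula.realize_relabel]
  exact Formula.realize_top.mpr trivial

theorem extend_to_DPhi_enumeration_general [Nonempty M] [Countable M]
    {Φ : ∀ n : ℕ, L.Formula (Fin n ⊕ Unit)}
    (hΦ : {k | ∀ v : Fin k → M, henkinWitnesses (Φ k) v = Set.univ}.Infinite)
    {n : ℕ} {a : Fin n → M} (ha : RealizesDn Φ n a) :
    ∃ b : ℕ → M, (∀ i : Fin n, b i = a i) ∧ RealizesD Φ b ∧ Function.Surjective b :=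
  exists_surjective_selection_extending (fun k => henkinWitnesses_nonempty (Φ k)) hΦ a ha

end Witnesses

/-- STATEMENT 10: Let `Φ` be rich, `M ⊨ T` a countable model, and `a_{<n}` a tuple in
`M` satisfying `D_{Φ,n}`.  Then `a_{<n}` extends to a sequence `b ∈ M^ℕ` realizing
`D_Φ` which enumerates `M`.  In particular, `D_Φ` is realized by an enumeration in
every countable model of `T`, so `D_Φ` is never empty. -/
theorem extend_to_DPhi_enumeration {L : FirstOrder.Language} [Countable L.Symbols]
    (T : L.Theory) (hT : T.IsComplete)
    (Φ : ∀ n : ℕ, L.Formula (Fin n ⊕ Unit)) (hΦ : IsRich Φ)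
    (M : Type) [L.Structure M] [Nonempty M] [Countable M] (hM : T.Model M)
    (n : ℕ) (a : Fin n → M) (ha : RealizesDn Φ n a) :
    (∃ b : ℕ → M, (∀ i : Fin n, b i = a i) ∧ RealizesD Φ b ∧ Function.Surjective b) ∧
    (∃ b : ℕ → M, RealizesD Φ b ∧ Function.Surjective b) := by
  have hfree := hΦ.infinite_henkinWitnesses_eq_univ (M := M)
  exact ⟨extend_to_DPhi_enumeration_general hfree ha,
    (extend_to_DPhi_enumeration_general hfree (a := Fin.elim0) nofun).imp fun _ => And.right⟩
end

section
/- Let Φ be a rich sequence, M ⊨ T a model, and a ∈ M^ℕ a sequence realizing D_Φ. Then the image {a_n : n ∈ ℕ} is the universe of an elementary substructure of M (it satisfies the Tarski–Vaught test). -/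
open FirstOrder FirstOrder.Language

variable {L : FirstOrder.Language}

/-!
By the Tarski–Vaught test it suffices that `{a_n}` meets every nonempty set `D ⊆ M` definable
over it. Such a `D` involves only finitely many parameters, so it is defined by some
`ψ(a_{<k}, y)`. Richness lists `ψ` as `φ_n` with `n ≥ k`, and `D_Φ` then forces `a_n ∈ D`.
-/

section Parameters

variable {M : Type*} [L.Structure M] {α ι : Type*} {s : Set (α → M)}

theorem definable_range_iff_exists_formula_sum {b : ι → M} :
    (Set.range b).Definable L s ↔
      ∃ φ : L.Formula (ι ⊕ α), s = {v | φ.Realize (Sum.elim b v)} := by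
  rw [Set.definable_iff_exists_formula_sum]
  constructor
  · rintro ⟨φ, rfl⟩
    refine ⟨φ.relabel (Sum.map (Set.rangeSplitting b) id), ?_⟩
    simp only [Formula.realize_relabel, Sum.elim_comp_map, Set.comp_rangeSplitting,
      Function.comp_id]
  · rintro ⟨φ, rfl⟩
    refine ⟨φ.relabel (Sum.map (Set.rangeFactorization b) id), ?_⟩
    simp only [Formula.realize_relabel, Sum.elim_comp_map, Set.coe_comp_rangeFactorization,
      Function.comp_id]

theorem definable_iUnion_iff_of_directed [Nonempty ι] {A : ι → Set M}
    (hA : Directed (· ⊆ ·) A) :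
    (⋃ i, A i).Definable L s ↔ ∃ i, (A i).Definable L s := by
  constructor
  · rw [Set.definable_iff_finitely_definable]
    rintro ⟨F, hF, hs⟩
    obtain ⟨i, hi⟩ := hA.exists_mem_subset_of_finset_subset_biUnion hF
    exact ⟨i, hs.mono hi⟩
  · rintro ⟨i, hs⟩
    exact hs.mono (Set.subset_iUnion A i)

theorem definable_range_nat_iff_exists_formula_sum {a : ℕ → M} :
    (Set.range a).Definable L s ↔
      ∃ (k : ℕ) (φ : L.Formula (Fin k ⊕ α)),
        s = {v | φ.Realize (Sum.elim (fun i : Fin k => a i) v)} := by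
  have range_eq : Set.range a = ⋃ k, Set.range fun i : Fin k => a i := by
    ext x
    simp only [Set.mem_range, Set.mem_iUnion]
    exact ⟨fun ⟨n, hn⟩ => ⟨n + 1, Fin.last n, hn⟩, fun ⟨_, i, hi⟩ => ⟨i, hi⟩⟩
  have range_mono : Monotone fun k => Set.range fun i : Fin k => a i := by
    rintro k n hkn _ ⟨i, rfl⟩
    exact ⟨Fin.castLE hkn i, rfl⟩
  rw [range_eq, definable_iUnion_iff_of_directed range_mono.directed_le]
  simp only [definable_range_iff_exists_formula_sum]

end Parameters

namespace RealizesD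

variable {Φ : ∀ n : ℕ, L.Formula (Fin n ⊕ Unit)} {M : Type*} [L.Structure M] {a : ℕ → M}

theorem exists_realize_apply (ha : RealizesD Φ a) (hΦ : IsRich Φ) {k : ℕ}
    (ψ : L.Formula (Fin k ⊕ Unit)) {y : M}
    (hy : ψ.Realize (Sum.elim (fun i : Fin k => a i) fun _ => y)) :
    ∃ n, ψ.Realize (Sum.elim (fun i : Fin k => a i) fun _ => a n) := by
  obtain ⟨n, hkn, hn⟩ := hΦ k ψ
  have realize_iff (z : M) : (Φ n).Realize (Sum.elim (fun i : Fin n => a i) fun _ => z) ↔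
      ψ.Realize (Sum.elim (fun i : Fin k => a i) fun _ => z) := by
    rw [hn, Formula.realize_relabel, Sum.elim_comp_map]
    rfl
  exact ⟨n, (realize_iff _).1 (ha n y ((realize_iff y).2 hy))⟩

theorem meetsDefinable_range (ha : RealizesD Φ a) (hΦ : IsRich Φ) :
    L.MeetsDefinable (Set.range a) := by
  rintro D ⟨y, hy⟩ hD
  have hD' : (Set.range a).Definable L {v : Unit → M | v () ∈ D} :=
    hD.preimage_comp fun _ => ()
  obtain ⟨k, ψ, hψ⟩ := definable_range_nat_iff_exists_formula_sum.1 hD'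
  have mem_iff (z : M) : z ∈ D ↔ ψ.Realize (Sum.elim (fun i : Fin k => a i) fun _ => z) :=
    Set.ext_iff.1 hψ fun _ => z
  obtain ⟨n, hn⟩ := ha.exists_realize_apply hΦ ψ ((mem_iff y).1 hy)
  exact ⟨a n, (mem_iff _).2 hn, n, rfl⟩

end RealizesD

/-- STATEMENT 12: If `Φ` is rich and `a ∈ M^ℕ` realizes `D_Φ` in a model `M ⊨ T`, then
the image `{a_n : n ∈ ℕ}` is the universe of an elementary substructure of `M` (it
satisfies the Tarski–Vaught test). -/
theorem range_of_DPhi_realization_elementary {L : FirstOrder.Language}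
    [Countable L.Symbols] (T : L.Theory) (hT : T.IsComplete)
    (Φ : ∀ n : ℕ, L.Formula (Fin n ⊕ Unit)) (hΦ : IsRich Φ)
    (M : Type*) [L.Structure M] (hM : T.Model M)
    (a : ℕ → M) (ha : RealizesD Φ a) :
    ∃ N : L.ElementarySubstructure M, ∀ x : M, x ∈ N ↔ x ∈ Set.range a := by
  have meets : L.MeetsDefinable (Set.range a) := ha.meetsDefinable_range hΦ
  exact ⟨meets.toElementarySubstructure, Set.ext_iff.1 meets.closure_eq_self⟩
end

section
/- Assume no model of T is a singleton, and let Φ be a rich sequence. Then B_Φ(T), the set of complete types in S_ℕ(T) extending D_Φ, equipped with the subspace topology of the Stone space S_ℕ(T), is homeomorphic to the Cantor space 2^ℕ (it is a nonempty, compact, metrizable, totally disconnected space without isolated points). -/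
open FirstOrder FirstOrder.Language

variable {L : FirstOrder.Language}

/-- The (Boolean-valued) complete type of a tuple `a : α → M`: the set of formulas in
variables `α` satisfied by `a`, viewed as a point of the Stone-type space
`L.Formula α → Bool` (with the product topology, `Bool` discrete). -/
noncomputable def tpFun {M : Type*} [L.Structure M] {α : Type*} (a : α → M) :
    L.Formula α → Bool :=
  fun φ => @decide (φ.Realize a) (Classical.propDecidable _)

/-- `B_Φ(T) = S_{D_Φ}(T)`: the set of complete types extending `D_Φ` (equivalently,
since the language is countable, the types of realizations of `D_Φ` in countable models
of `T`). -/
def BPhi (T : L.Theory) (Φ : ∀ n : ℕ, L.Formula (Fin n ⊕ Unit)) :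
    Set (L.Formula ℕ → Bool) :=
  {p | ∃ (M : Type) (_ : L.Structure M) (_ : T.Model M) (_ : Countable M) (a : ℕ → M),
    RealizesD Φ a ∧ p = tpFun a}

/-!
`B_Φ(T)` is compact, second countable, totally disconnected and perfect, so it is the Cantor space
by Brouwer's theorem. Compactness is Łoś's theorem: an ultralimit of types of realizations of
`D_Φ` is the type of a realization of `D_Φ` in an ultraproduct, which the downward
Löwenheim–Skolem theorem brings back to a countable model. For perfectness, a neighbourhood of the
type of `a` only constrains `a_{<m}` for some `m`; whenever `φ_m` is valid in `T`, the conjunct of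
`D_Φ` at `m` leaves the value at `m` free, so it can be chosen to change the truth value of
`x_m = x_0`, and any finite sequence satisfying its part of `D_Φ` extends to a realization of `D_Φ`.
-/

open Filter Set Topology

section Cantor

open PiNat

variable {X : Type*} [TopologicalSpace X]

/-- A scheme of clopen sets in which the children of each set partition it and every branch
intersects in at most one point: a homeomorphism with `ℕ → β` cut into cylinders. As in
`CantorScheme`, the latest choice is the head of the list. -/
structure IsClopenPartitionScheme {β : Type*} (A : List β → Set X) : Prop where
  nil_eq_univ : A [] = univ
  isClopen (l : List β) : IsClopen (A l)
  nonempty (l : List β) : (A l).Nonempty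
  iUnion_cons (l : List β) : ⋃ i, A (i :: l) = A l
  disjoint : CantorScheme.Disjoint A
  subsingleton_iInter (b : ℕ → β) : (⋂ n, A (res b n)).Subsingleton

namespace IsClopenPartitionScheme

variable {β : Type*} {A : List β → Set X}

theorem antitone (hA : IsClopenPartitionScheme A) : CantorScheme.Antitone A :=
  fun l i => (subset_iUnion _ i).trans (hA.iUnion_cons l).subset

theorem exists_forall_mem_res (hA : IsClopenPartitionScheme A) (x : X) :
    ∃ b : ℕ → β, ∀ n, x ∈ A (res b n) := by
  have exists_child : ∀ l : {l // x ∈ A l}, ∃ i, x ∈ A (i :: l) := fun l =>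
    mem_iUnion.1 ((hA.iUnion_cons l).symm ▸ l.2)
  choose child hchild using exists_child
  let address : ℕ → {l // x ∈ A l} := fun n =>
    n.rec ⟨[], hA.nil_eq_univ ▸ mem_univ x⟩ fun _ l => ⟨child l :: l, hchild l⟩
  have res_eq_address : ∀ n, res (fun n => child (address n)) n = (address n).1 := by
    intro n
    induction n with
    | zero => rfl
    | succ n ih => exact congrArg _ ih
  exact ⟨fun n => child (address n), fun n => res_eq_address n ▸ (address n).2⟩

theorem res_eq_res_of_mem (hA : IsClopenPartitionScheme A) {x : X} {b c : ℕ → β} {n : ℕ}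
    (hb : x ∈ A (res b n)) (hc : x ∈ A (res c n)) : res b n = res c n := by
  induction n with
  | zero => rfl
  | succ n ih =>
    have initial_eq : res b n = res c n := ih (hA.antitone _ _ hb) (hA.antitone _ _ hc)
    rw [res_succ, initial_eq] at hb
    rw [res_succ, res_succ, initial_eq, (hA.disjoint _).eq (not_disjoint_iff.2 ⟨x, hb, hc⟩)]

theorem nonempty_iInter_res [CompactSpace X] (hA : IsClopenPartitionScheme A) (b : ℕ → β) :
    (⋂ n, A (res b n)).Nonempty :=
  IsCompact.nonempty_iInter_of_sequence_nonempty_isCompact_isClosed _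
    (fun _ => hA.antitone _ _) (fun _ => hA.nonempty _) (hA.isClopen _).isClosed.isCompact
    fun _ => (hA.isClopen _).isClosed

theorem nonempty_homeomorph [CompactSpace X] [TopologicalSpace β] [DiscreteTopology β]
    (hA : IsClopenPartitionScheme A) : Nonempty (X ≃ₜ (ℕ → β)) := by
  choose code mem_code using hA.exists_forall_mem_res
  have code_eq {x : X} {n : ℕ} {b : ℕ → β} (hx : x ∈ A (res b n)) : res (code x) n = res b n :=
    hA.res_eq_res_of_mem (mem_code x n) hx
  have continuous_code : Continuous code := continuous_pi fun n => by
    refine ((IsLocallyConstant.iff_exists_open _).2 fun x => ?_).continuous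
    exact ⟨A (res (code x) (n + 1)), (hA.isClopen _).isOpen, mem_code x _,
      fun z hz => res_eq_res.1 (code_eq hz) n.lt_succ_self⟩
  have injective_code : Function.Injective code := fun x y h =>
    hA.subsingleton_iInter (code x) (mem_iInter.2 (mem_code x)) (mem_iInter.2 (h ▸ mem_code y))
  have surjective_code : Function.Surjective code := fun b => by
    obtain ⟨x, hx⟩ := hA.nonempty_iInter_res b
    exact ⟨x, res_injective (funext fun n => code_eq (mem_iInter.1 hx n))⟩
  exact ⟨(isHomeomorph_iff_continuous_bijective.2
    ⟨continuous_code, injective_code, surjective_code⟩).homeomorph⟩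

end IsClopenPartitionScheme

theorem exists_isClopen_splitting [TotallySeparatedSpace X] [PerfectSpace X] {A : Set X}
    (hA : IsOpen A) (hne : A.Nonempty) :
    ∃ C, IsClopen C ∧ (A ∩ C).Nonempty ∧ (A ∩ Cᶜ).Nonempty := by
  obtain ⟨x, hx⟩ := hne
  obtain ⟨y, ⟨hy, -⟩, hyx⟩ :=
    preperfect_iff_nhds.1 hA.preperfect x hx A (hA.mem_nhds hx)
  obtain ⟨C, hC, hxC, hyC⟩ := exists_isClopen_of_totally_separated hyx.symm
  exact ⟨C, hC, ⟨x, hx, hxC⟩, ⟨y, hy, hyC⟩⟩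

theorem exists_isClopen_partition_subset_or_disjoint [TotallySeparatedSpace X] [PerfectSpace X]
    {A V : Set X} (hA : IsClopen A) (hne : A.Nonempty) (hV : IsClopen V) :
    ∃ B : Bool → Set X, (∀ i, IsClopen (B i)) ∧ (∀ i, (B i).Nonempty) ∧
      Pairwise (Function.onFun Disjoint B) ∧ ⋃ i, B i = A ∧ ∀ i, B i ⊆ V ∨ Disjoint (B i) V := by
  suffices ∃ C, IsClopen C ∧ (A ∩ C).Nonempty ∧ (A ∩ Cᶜ).Nonempty ∧
      (A ⊆ V ∨ Disjoint A V ∨ C = V) by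
    obtain ⟨C, hC, hAC, hAC', hdecided⟩ := this
    refine ⟨fun i => cond i (A ∩ C) (A ∩ Cᶜ), Bool.forall_bool.2 ⟨hA.inter hC.compl, hA.inter hC⟩,
      Bool.forall_bool.2 ⟨hAC', hAC⟩, ?_, ?_, ?_⟩
    · rw [pairwise_disjoint_on_bool]
      exact disjoint_compl_right.mono inter_subset_right inter_subset_right
    · exact (union_eq_iUnion ..).symm.trans (inter_union_compl A C)
    · have subset_A : ∀ i, cond i (A ∩ C) (A ∩ Cᶜ) ⊆ A :=
        Bool.forall_bool.2 ⟨inter_subset_left, inter_subset_left⟩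
      rcases hdecided with hsub | hdisj | rfl
      · exact fun i => .inl ((subset_A i).trans hsub)
      · exact fun i => .inr (hdisj.mono_left (subset_A i))
      · exact Bool.forall_bool.2
          ⟨.inr (disjoint_compl_left.mono_left inter_subset_right), .inl inter_subset_right⟩
  by_cases hsub : A ⊆ V
  · obtain ⟨C, hC, hAC, hAC'⟩ := exists_isClopen_splitting hA.isOpen hne
    exact ⟨C, hC, hAC, hAC', .inl hsub⟩
  by_cases hdisj : Disjoint A V
  · obtain ⟨C, hC, hAC, hAC'⟩ := exists_isClopen_splitting hA.isOpen hne
    exact ⟨C, hC, hAC, hAC', .inr (.inl hdisj)⟩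
  · exact ⟨V, hV, not_disjoint_iff_nonempty_inter.1 hdisj,
      inter_compl_nonempty_iff.2 hsub, .inr (.inr rfl)⟩

-- Each clopen set `V n` is decided by the sets of level `n + 1`, so branches separate points.
theorem exists_isClopenPartitionScheme [TotallySeparatedSpace X] [PerfectSpace X] [Nonempty X]
    [Countable (TopologicalSpace.Clopens X)] :
    ∃ A : List Bool → Set X, IsClopenPartitionScheme A := by
  obtain ⟨V, surjective_V⟩ := exists_surjective_nat (TopologicalSpace.Clopens X)
  choose B isClopen_B nonempty_B disjoint_B iUnion_B decided_B using
    fun (A : {A : Set X // IsClopen A ∧ A.Nonempty}) n =>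
      exists_isClopen_partition_subset_or_disjoint A.2.1 A.2.2 (V n).isClopen
  let A : List Bool → {A : Set X // IsClopen A ∧ A.Nonempty} := fun l =>
    l.rec ⟨univ, isClopen_univ, univ_nonempty⟩
      fun i l A => ⟨B A l.length i, isClopen_B _ _ _, nonempty_B _ _ _⟩
  refine ⟨fun l => (A l).1, {
    nil_eq_univ := rfl
    isClopen := fun l => (A l).2.1
    nonempty := fun l => (A l).2.2
    iUnion_cons := fun l => iUnion_B (A l) l.length
    disjoint := fun l => disjoint_B (A l) l.length
    subsingleton_iInter := fun b x hx y hy => ?_ }⟩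
  by_contra hxy
  obtain ⟨W, hW, hxW, hyW⟩ := exists_isClopen_of_totally_separated hxy
  obtain ⟨n, hn⟩ := surjective_V ⟨W, hW⟩
  have hxB : x ∈ B (A (res b n)) (res b n).length (b n) := mem_iInter.1 hx (n + 1)
  have hyB : y ∈ B (A (res b n)) (res b n).length (b n) := mem_iInter.1 hy (n + 1)
  have decided := decided_B (A (res b n)) (res b n).length (b n)
  rw [res_length, hn] at decided
  rw [res_length] at hxB hyB
  exact decided.elim (fun hsub => hyW (hsub hyB)) fun hdisj => hdisj.notMem_of_mem_left hxB hxW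

/-- **Brouwer's theorem** characterizing the Cantor space. -/
theorem nonempty_homeomorph_cantor_of_perfectSpace [CompactSpace X] [T2Space X]
    [TotallyDisconnectedSpace X] [SecondCountableTopology X] [PerfectSpace X] [Nonempty X] :
    Nonempty (X ≃ₜ (ℕ → Bool)) := by
  have := TopologicalSpace.Clopens.countable_iff_secondCountable.2 ‹SecondCountableTopology X›
  obtain ⟨A, hA⟩ := exists_isClopenPartitionScheme (X := X)
  exact hA.nonempty_homeomorph

end Cantor

section Types

variable {M : Type*} [L.Structure M] {α : Type*}

theorem tpFun_eq_true_iff {a : α → M} {φ : L.Formula α} : tpFun a φ = true ↔ φ.Realize a :=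
  @decide_eq_true_iff _ (Classical.propDecidable _)

theorem tpFun_apply_eq_iff {N : Type*} [L.Structure N] {a : α → M} {b : α → N}
    {φ : L.Formula α} : tpFun a φ = tpFun b φ ↔ (φ.Realize a ↔ φ.Realize b) := by
  rw [Bool.eq_iff_iff, tpFun_eq_true_iff, tpFun_eq_true_iff]

theorem tpFun_eq_tpFun_iff {N : Type*} [L.Structure N] {a : α → M} {b : α → N} :
    tpFun (L := L) a = tpFun b ↔ ∀ φ : L.Formula α, φ.Realize a ↔ φ.Realize b := by
  simp only [funext_iff, tpFun_apply_eq_iff]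

theorem realize_congr_of_eqOn_freeVarFinset [DecidableEq α] {φ : L.Formula α} {a b : α → M}
    (h : EqOn a b (BoundedFormula.freeVarFinset φ)) : φ.Realize a ↔ φ.Realize b :=
  (BoundedFormula.realize_restrictFreeVar (f := id) (v := fun i => a i) a fun _ => rfl).symm.trans
    (BoundedFormula.realize_restrictFreeVar b fun i => h i.2)

theorem exists_forall_tpFun_eq_of_eqOn_Iio (I : Finset (L.Formula ℕ)) :
    ∃ m, ∀ a b : ℕ → M, EqOn a b (Iio m) → ∀ φ ∈ I, tpFun a φ = tpFun b φ := by
  classical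
  obtain ⟨m, hm⟩ := (I.biUnion BoundedFormula.freeVarFinset).exists_nat_subset_range
  exact ⟨m, fun a b hab φ hφ => tpFun_apply_eq_iff.2 <| realize_congr_of_eqOn_freeVarFinset
    fun i hi => hab (Finset.mem_range.1 (hm (Finset.mem_biUnion.2 ⟨φ, hφ, hi⟩)))⟩

end Types

section LowenheimSkolem

open Cardinal

variable [Countable L.Symbols] {M : Type*} [L.Structure M]

theorem exists_countable_elementarySubstructure {s : Set M} (hs : s.Countable) :
    ∃ S : L.ElementarySubstructure M, s ⊆ S ∧ Countable S := by
  rcases finite_or_infinite M with _ | _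
  · exact ⟨⊤, fun _ _ => trivial, inferInstance⟩
  · have card_le : L.card ≤ ℵ₀ := mk_le_aleph0_iff.2 ‹Countable L.Symbols›
    obtain ⟨S, hsS, hS⟩ := exists_elementarySubstructure_card_eq L s (ℵ₀ : Cardinal.{0}) le_rfl
      (by simpa using hs) (by simpa only [lift_aleph0, lift_le_aleph0]) (by simp)
    exact ⟨S, hsS, mk_le_aleph0_iff.1 (by simpa using hS.le)⟩

theorem exists_countable_model_tpFun_eq (T : L.Theory) [T.Model M] {ι : Type*} [Countable ι]
    (a : ι → M) :
    ∃ (N : Type) (_ : L.Structure N) (_ : T.Model N) (_ : Countable N) (b : ι → N),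
      tpFun (L := L) b = tpFun a := by
  obtain ⟨S, haS, _⟩ := exists_countable_elementarySubstructure (L := L) (countable_range a)
  let e : S ≃ Shrink.{0} S := equivShrink.{0} S
  let _ : L.Structure (Shrink.{0} S) := e.inducedStructure
  let g : S ≃[L] Shrink.{0} S := e.inducedStructureEquiv
  let b : ι → S := fun i => ⟨a i, haS ⟨i, rfl⟩⟩
  refine ⟨Shrink.{0} S, inferInstance, StrongHomClass.theory_model g, e.symm.injective.countable,
    g ∘ b, tpFun_eq_tpFun_iff.2 fun φ => ?_⟩
  rw [StrongHomClass.realize_formula g φ]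
  exact (S.subtype.map_formula φ b).symm

end LowenheimSkolem

section Ultraproduct

variable {ι : Type*} (u : Ultrafilter ι) (M : ι → Type*) [∀ i, L.Structure (M i)]
  [∀ i, Nonempty (M i)]

theorem model_ultraproduct (T : L.Theory) [∀ i, T.Model (M i)] :
    T.Model ((u : Filter ι).Product M) :=
  ⟨fun φ hφ => (Ultraproduct.sentence_realize φ).2 <|
    .of_forall fun i => T.realize_sentence_of_mem (M := M i) hφ⟩

-- Łoś's theorem, read in the Stone space.
theorem tendsto_tpFun_ultraproduct {α : Type*} (a : ∀ i, α → M i) :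
    Tendsto (fun i => tpFun (L := L) (a i)) u
      (𝓝 (tpFun (M := (u : Filter ι).Product M) fun j => (fun i => a i j : ∀ i, M i))) := by
  refine tendsto_pi_nhds.2 fun φ => ?_
  rw [nhds_discrete, tendsto_pure]
  have los := Ultraproduct.realize_formula_cast (u := u) φ fun j i => a i j
  by_cases h : ∀ᶠ i in (u : Filter ι), φ.Realize (a i)
  · filter_upwards [h] with i hi
    exact tpFun_apply_eq_iff.2 (iff_of_true hi (los.2 h))
  · filter_upwards [Ultrafilter.eventually_not.2 h] with i hi
    exact tpFun_apply_eq_iff.2 (iff_of_false hi (mt los.1 h))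

end Ultraproduct

section PartialType

variable {Φ : ∀ n : ℕ, L.Formula (Fin n ⊕ Unit)} {M : Type*} [L.Structure M]

/-- The `k`-th conjunct `∀ y [φ_k(x_{<k}, y) → φ_k(x_{<k}, x_k)]` of `D_Φ`, written in the
equivalent form `(∃ y φ_k(x_{<k}, y)) → φ_k(x_{<k}, x_k)`. -/
noncomputable def conjunctD (Φ : ∀ n : ℕ, L.Formula (Fin n ⊕ Unit)) (k : ℕ) : L.Formula ℕ :=
  (((Φ k).relabel (Sum.map (fun i : Fin k => (i : ℕ)) id)).iExs Unit).imp
    ((Φ k).relabel (Sum.elim (fun i : Fin k => (i : ℕ)) fun _ => k))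

theorem realize_conjunctD {k : ℕ} {a : ℕ → M} :
    (conjunctD Φ k).Realize a ↔ ∀ y : M,
      (Φ k).Realize (Sum.elim (fun i : Fin k => a i) fun _ => y) →
      (Φ k).Realize (Sum.elim (fun i : Fin k => a i) fun _ => a k) := by
  simp only [conjunctD, Formula.realize_imp, Formula.realize_iExs, Formula.realize_relabel,
    Sum.elim_comp_map, Sum.comp_elim, Function.comp_id, forall_exists_index]
  exact (Equiv.funUnique Unit M).forall_congr_left

theorem realizesD_iff_forall_tpFun {a : ℕ → M} :
    RealizesD Φ a ↔ ∀ k, tpFun a (conjunctD Φ k) = true :=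
  forall_congr' fun _ => realize_conjunctD.symm.trans tpFun_eq_true_iff.symm

theorem realizesD_iff_of_tpFun_eq {N : Type*} [L.Structure N] {a : ℕ → M} {b : ℕ → N}
    (h : tpFun (L := L) a = tpFun b) : RealizesD Φ a ↔ RealizesD Φ b := by
  rw [realizesD_iff_forall_tpFun, realizesD_iff_forall_tpFun, h]

theorem realizesD_ultraproduct {ι : Type*} (u : Ultrafilter ι) {M : ι → Type*}
    [∀ i, L.Structure (M i)] [∀ i, Nonempty (M i)] {a : ∀ i, ℕ → M i}
    (ha : ∀ i, RealizesD Φ (a i)) :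
    RealizesD Φ (M := (u : Filter ι).Product M) fun j => (fun i => a i j : ∀ i, M i) := by
  refine realizesD_iff_forall_tpFun.2 fun k => tpFun_eq_true_iff.2 ?_
  exact (Ultraproduct.realize_formula_cast _ fun j i => a i j).2 <| .of_forall fun i =>
    tpFun_eq_true_iff.1 (realizesD_iff_forall_tpFun.1 (ha i) k)

theorem exists_seq_forall_initial {α : Type*} {P : ∀ n : ℕ, (Fin n → α) → α → Prop}
    (h : ∀ n f, ∃ y, P n f y) : ∃ b : ℕ → α, ∀ n, P n (fun i => b i) (b n) := by
  choose next hnext using h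
  let b : ℕ → α := Nat.strongRec fun n b => next n fun i => b i i.2
  have b_eq (n : ℕ) : b n = next n fun i => b i := Nat.strongRec_eq ..
  exact ⟨b, fun n => b_eq n ▸ hnext n _⟩

theorem RealizesDn.exists_realizesD [Nonempty M] {m : ℕ} {a : Fin m → M}
    (ha : RealizesDn Φ m a) : ∃ b : ℕ → M, (∀ i : Fin m, b i = a i) ∧ RealizesD Φ b := by
  have exists_next (n : ℕ) (f : Fin n → M) : ∃ y, (∀ h : n < m, y = a ⟨n, h⟩) ∧ (m ≤ n → ∀ z,
      (Φ n).Realize (Sum.elim f fun _ => z) → (Φ n).Realize (Sum.elim f fun _ => y)) := by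
    rcases lt_or_ge n m with h | h
    · exact ⟨a ⟨n, h⟩, fun _ => rfl, fun h' => absurd h h'.not_gt⟩
    · exact ⟨Classical.epsilon fun y => (Φ n).Realize (Sum.elim f fun _ => y),
        fun h' => absurd h h'.not_ge, fun _ z hz => Classical.epsilon_spec
          (p := fun y => (Φ n).Realize (Sum.elim f fun _ => y)) ⟨z, hz⟩⟩
  obtain ⟨b, hb⟩ := exists_seq_forall_initial exists_next
  have b_eq (i : Fin m) : b i = a i := (hb i).1 i.2
  refine ⟨b, b_eq, fun k y hy => ?_⟩
  rcases lt_or_ge k m with h | h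
  · have initial_eq : (fun i : Fin k => b i) = fun i : Fin k => a (Fin.castLE h.le i) :=
      funext fun i => b_eq (Fin.castLE h.le i)
    rw [initial_eq] at hy ⊢
    rw [b_eq ⟨k, h⟩]
    exact ha ⟨k, h⟩ y hy
  · exact (hb k).2 h y hy

theorem RealizesDn.snoc {n : ℕ} {a : Fin n → M} (ha : RealizesDn Φ n a) {z : M}
    (hz : ∀ y, (Φ n).Realize (Sum.elim a fun _ => y) → (Φ n).Realize (Sum.elim a fun _ => z)) :
    RealizesDn Φ (n + 1) (Fin.snoc a z) := by
  have initial_eq (k : ℕ) (h : k ≤ n) :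
      (fun i : Fin k => (Fin.snoc a z : Fin (n + 1) → M) (Fin.castLE (h.trans n.le_succ) i)) =
        fun i => a (Fin.castLE h i) :=
    funext fun i => Fin.snoc_castSucc (α := fun _ => M) z a (Fin.castLE h i)
  refine Fin.lastCases (fun y => ?_) fun k y => ?_
  · rw [Fin.snoc_last]
    exact (initial_eq n le_rfl) ▸ hz y
  · rw [Fin.snoc_castSucc]
    simpa only [Fin.val_castSucc, initial_eq k k.2.le] using ha k y

theorem RealizesD.exists_tpFun_ne [Nontrivial M] {a : ℕ → M} (ha : RealizesD Φ a) {m : ℕ}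
    (hm : 0 < m) (hΦ : ∀ v : Fin m ⊕ Unit → M, (Φ m).Realize v) :
    ∃ b : ℕ → M, RealizesD Φ b ∧ EqOn b a (Iio m) ∧ tpFun (L := L) b ≠ tpFun a := by
  obtain ⟨z, hz⟩ : ∃ z : M, ¬(z = a 0 ↔ a m = a 0) := by
    by_cases h : a m = a 0
    · simpa [h] using exists_ne (a 0)
    · exact ⟨a 0, by simpa using h⟩
  have realizesDn_a : RealizesDn Φ m fun i => a i := fun k => ha k
  obtain ⟨b, hb, realizesD_b⟩ := (realizesDn_a.snoc (z := z) fun _ _ => hΦ _).exists_realizesD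
  have eqOn_b : EqOn b a (Iio m) := fun i hi =>
    (hb (Fin.castSucc ⟨i, hi⟩)).trans (Fin.snoc_castSucc (α := fun _ => M) ..)
  have b_m : b m = z := (hb (Fin.last m)).trans (Fin.snoc_last ..)
  refine ⟨b, realizesD_b, eqOn_b, fun h => hz ?_⟩
  simpa [Formula.realize_equal, b_m, eqOn_b hm] using
    tpFun_eq_tpFun_iff.1 h ((Term.var m).equal (Term.var 0))

end PartialType

section BPhi

variable {T : L.Theory} {Φ : ∀ n : ℕ, L.Formula (Fin n ⊕ Unit)}

theorem RealizesD.tpFun_mem_BPhi [Countable L.Symbols] {M : Type*} [L.Structure M] [T.Model M]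
    {a : ℕ → M} (ha : RealizesD Φ a) : tpFun a ∈ BPhi T Φ := by
  obtain ⟨N, structN, modelN, countableN, b, hb⟩ := exists_countable_model_tpFun_eq T a
  exact ⟨N, structN, modelN, countableN, b, (realizesD_iff_of_tpFun_eq hb).2 ha, hb.symm⟩

theorem nonempty_BPhi [Countable L.Symbols] (hT : T.IsSatisfiable) : (BPhi T Φ).Nonempty := by
  obtain ⟨M⟩ := hT
  have realizesDn_zero : RealizesDn Φ 0 (Fin.elim0 : Fin 0 → M) := fun k => k.elim0
  obtain ⟨b, -, hb⟩ := realizesDn_zero.exists_realizesD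
  exact ⟨_, hb.tpFun_mem_BPhi⟩

theorem isCompact_BPhi [Countable L.Symbols] : IsCompact (BPhi T Φ) := by
  rw [isCompact_iff_compactSpace, ← isCompact_univ_iff, isCompact_iff_ultrafilter_le_nhds]
  intro u _
  choose M structM modelM _ a ha hp using fun p : BPhi T Φ => p.2
  have (p : BPhi T Φ) : Nonempty (M p) := ⟨a p 0⟩
  have : T.Model ((u : Filter (BPhi T Φ)).Product M) := model_ultraproduct u M T
  refine ⟨⟨_, (realizesD_ultraproduct u ha).tpFun_mem_BPhi⟩, mem_univ _, ?_⟩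
  rw [nhds_subtype_eq_comap, ← tendsto_iff_comap]
  exact (tendsto_tpFun_ultraproduct u M a).congr fun p => (hp p).symm

theorem perfectSpace_BPhi
    (hsing : ∀ (M : Type) (_ : L.Structure M) (_ : T.Model M) (_ : Nonempty M), ¬ Subsingleton M)
    (hΦ : ∃ᶠ n in atTop, T ⊨ᵇ Φ n) : PerfectSpace (BPhi T Φ) := by
  refine ⟨preperfect_iff_nhds.2 ?_⟩
  rintro ⟨p, hp⟩ - U hU
  rw [nhds_subtype_eq_comap, mem_comap, nhds_pi] at hU
  obtain ⟨W, hW, hWU⟩ := hU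
  obtain ⟨M, structM, modelM, countableM, a, ha, rfl⟩ := id hp
  have : Nonempty M := ⟨a 0⟩
  have : Nontrivial M := not_subsingleton_iff_nontrivial.1 (hsing M structM modelM this)
  obtain ⟨I, t, ht, htW⟩ := mem_pi'.1 hW
  obtain ⟨k, hk⟩ := exists_forall_tpFun_eq_of_eqOn_Iio (M := M) I
  obtain ⟨m, hkm, hΦm⟩ := frequently_atTop.1 hΦ (k + 1)
  obtain ⟨b, hb, hba, hne⟩ :=
    ha.exists_tpFun_ne (k.succ_pos.trans_le hkm) fun v => hΦm.realize_formula M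
  have tpFun_b_mem_t : ∀ φ ∈ I, tpFun b φ ∈ t φ := fun φ hφ => by
    rw [hk b a (hba.mono (Iio_subset_Iio (k.le_succ.trans hkm))) φ hφ]
    exact mem_of_mem_nhds (ht φ)
  exact ⟨⟨tpFun b, M, structM, modelM, countableM, b, hb, rfl⟩,
    ⟨hWU (htW tpFun_b_mem_t), mem_univ _⟩, fun h => hne (congrArg Subtype.val h)⟩

theorem IsRich.frequently_models (hΦ : IsRich Φ) (T : L.Theory) : ∃ᶠ n in atTop, T ⊨ᵇ Φ n := by
  refine frequently_atTop.2 fun k => ?_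
  obtain ⟨n, hkn, hn⟩ := hΦ k ⊤
  refine ⟨n, hkn, Theory.models_formula_iff.2 fun M v => ?_⟩
  rw [hn, Formula.realize_relabel]
  exact Formula.realize_top.2 trivial

end BPhi

theorem BPhi_homeomorphic_cantor_general [Countable L.Symbols] (T : L.Theory)
    (hT : T.IsSatisfiable)
    (hsing : ∀ (M : Type) (_ : L.Structure M) (_ : T.Model M) (_ : Nonempty M), ¬ Subsingleton M)
    (Φ : ∀ n : ℕ, L.Formula (Fin n ⊕ Unit)) (hΦ : ∃ᶠ n in atTop, T ⊨ᵇ Φ n) :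
    Nonempty (BPhi T Φ ≃ₜ (ℕ → Bool)) := by
  have := (nonempty_BPhi (Φ := Φ) hT).to_subtype
  have := isCompact_iff_compactSpace.1 (isCompact_BPhi (T := T) (Φ := Φ))
  have := perfectSpace_BPhi hsing hΦ
  exact nonempty_homeomorph_cantor_of_perfectSpace

/-- STATEMENT 13: Assume no model of `T` is a singleton, and let `Φ` be rich.  Then
`B_Φ(T)`, the space of complete types extending `D_Φ` with the (subspace) Stone
topology, is homeomorphic to the Cantor space `2^ℕ`. -/
theorem BPhi_homeomorphic_cantor {L : FirstOrder.Language} [Countable L.Symbols]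
    (T : L.Theory) (hT : T.IsComplete)
    (hsing : ∀ (M : Type) (_ : L.Structure M) (_ : T.Model M) (_ : Nonempty M),
      ¬ Subsingleton M)
    (Φ : ∀ n : ℕ, L.Formula (Fin n ⊕ Unit)) (hΦ : IsRich Φ) :
    Nonempty (↥(BPhi T Φ) ≃ₜ (ℕ → Bool)) :=
  BPhi_homeomorphic_cantor_general T hT.1 hsing Φ (hΦ.frequently_models T)
end
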